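/- For every δ ∈ ℝ there exist a constant C > 0 and an integer N₀ such that for all N ≥ N₀, for every choice of a unit eigenvector u_N of H(δ)H(δ)ᵀ corresponding to its largest eigenvalue, and for every index 0 ≤ j < N: |r_j(N) − δ·ρ_j(N)| ≤ C·N²·a^{−N}. -/

import Mathlib

open Filter Matrix

/-- Hankelization (diagonal averaging): the `j`-th value is the average of the
entries `Y i k` with `i + k = j`. -/
noncomputable def hankelize {L K : ℕ} (Y : Matrix (Fin L) (Fin K) ℝ) (j : ℕ) : ℝ :=
  (∑ i : Fin L, ∑ k : Fin K, if (i : ℕ) + (k : ℕ) = j then Y i k else 0) /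
  (∑ i : Fin L, ∑ k : Fin K, if (i : ℕ) + (k : ℕ) = j then (1 : ℝ) else 0)

/-- The `L × K` Hankel (trajectory) matrix of a series `x`. -/
noncomputable def hankelOf (x : ℕ → ℝ) (L K : ℕ) : Matrix (Fin L) (Fin K) ℝ :=
  Matrix.of fun i k => x ((i : ℕ) + (k : ℕ))

/-- Squared Euclidean norm of a vector. -/
noncomputable def normSq {M : ℕ} (w : Fin M → ℝ) : ℝ := ∑ i, w i ^ 2

/-- `u` is a unit eigenvector of `A` corresponding to its largest eigenvalue. -/
def IsTopEigenvector {L : ℕ} (A : Matrix (Fin L) (Fin L) ℝ) (u : Fin L → ℝ) : Prop :=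
  normSq u = 1 ∧ ∃ μ : ℝ, A.mulVec u = μ • u ∧
    ∀ (ν : ℝ) (v : Fin L → ℝ), v ≠ 0 → A.mulVec v = ν • v → ν ≤ μ

/-- The exponential signal `x_n = a^n`. -/
noncomputable def expSignal (a : ℝ) : ℕ → ℝ := fun n => a ^ n

/-- The harmonic noise `e_n = cos (ξ n + φ)`. -/
noncomputable def cosNoise (ξ φ : ℝ) : ℕ → ℝ := fun n => Real.cos (ξ * (n : ℝ) + φ)

/-- The vector `W_M = (1, a, …, a^{M-1})ᵀ`. -/
noncomputable def Wvec (a : ℝ) (M : ℕ) : Fin M → ℝ := fun i => a ^ (i : ℕ)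

/-- `ρ_j = (𝒮(P₀ E Hᵀ S₀ H))_j + (𝒮(P₀⊥ E))_j`. -/
noncomputable def rho (a ξ φ : ℝ) (L K : ℕ) (j : ℕ) : ℝ :=
  let H := hankelOf (expSignal a) L K
  let E := hankelOf (cosNoise ξ φ) L K
  let P0perp : Matrix (Fin L) (Fin L) ℝ :=
    (normSq (Wvec a L))⁻¹ • Matrix.vecMulVec (Wvec a L) (Wvec a L)
  let P0 : Matrix (Fin L) (Fin L) ℝ := 1 - P0perp
  let S0 : Matrix (Fin L) (Fin L) ℝ :=
    ((normSq (Wvec a L)) ^ 2 * normSq (Wvec a K))⁻¹ • Matrix.vecMulVec (Wvec a L) (Wvec a L)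
  hankelize (P0 * E * Hᵀ * S0 * H) j + hankelize (P0perp * E) j

/-- The matrix `H(δ)H(δ)ᵀ` for the perturbed series `a^n + δ cos(ξ n + φ)`. -/
noncomputable def HdeltaSq (a ξ φ δ : ℝ) (L K : ℕ) : Matrix (Fin L) (Fin L) ℝ :=
  let Hδ := hankelOf (expSignal a) L K + δ • hankelOf (cosNoise ξ φ) L K
  Hδ * Hδᵀ

/-- The SSA reconstruction error `r_j = (𝒮(u uᵀ H(δ)))_j - a^j`. -/
noncomputable def recErr (a ξ φ δ : ℝ) (L K : ℕ) (u : Fin L → ℝ) (j : ℕ) : ℝ :=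
  hankelize (Matrix.vecMulVec u u *
    (hankelOf (expSignal a) L K + δ • hankelOf (cosNoise ξ φ) L K)) j - a ^ j

/-!
Let `u` be a leading left singular vector of `A = σ w zᵀ + F`, where `w`, `z` are unit vectors and
`F` is small compared with `σ`. The projection `P` onto `wᗮ` kills the signal in `A Aᵀ u = ‖A‖² u`
and leaves `‖A‖² P u = P F Aᵀ u`, so `‖P u‖ ≤ ‖F‖ / ‖A‖`. Inserting `Aᵀ u = σ ⟨w, u⟩ z + Fᵀ u` back
into the same identity gives `σ ⟨w, u⟩ P u = P F z + O(‖F‖² / σ)`, and hence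
`u uᵀ A = σ w zᵀ + (P F z zᵀ + w wᵀ F) + O(‖F‖² / σ)`.

The exponential signal has `σ = ‖W_L‖ ‖W_K‖ ≥ a ^ (N - 1)`, a bounded noise matrix has norm `O(N)`,
and diagonal averaging does not increase the largest entry.
-/

open ContinuousLinearMap InnerProductSpace Submodule
open scoped ComplexConjugate

section UnitVector

variable (𝕜 : Type*) {U : Type*} [RCLike 𝕜] [NormedAddCommGroup U] [InnerProductSpace 𝕜 U] {w : U}

theorem inner_smul_add_starProjection_orthogonal_singleton (hw : ‖w‖ = 1) (x : U) :
    inner 𝕜 w x • w + (𝕜 ∙ w)ᗮ.starProjection x = x := by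
  rw [← starProjection_unit_singleton 𝕜 hw, starProjection_add_starProjection_orthogonal]

theorem norm_inner_sq_add_norm_starProjection_orthogonal_singleton_sq (hw : ‖w‖ = 1) (x : U) :
    ‖inner 𝕜 w x‖ ^ 2 + ‖(𝕜 ∙ w)ᗮ.starProjection x‖ ^ 2 = ‖x‖ ^ 2 := by
  rw [norm_sq_eq_add_norm_sq_starProjection x (𝕜 ∙ w), starProjection_unit_singleton 𝕜 hw,
    norm_smul, hw, mul_one]

end UnitVector

section LeadingSingularVector

variable {𝕜 U V : Type*} [RCLike 𝕜] [NormedAddCommGroup U] [InnerProductSpace 𝕜 U]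
  [NormedAddCommGroup V] [InnerProductSpace 𝕜 V]

theorem norm_sub_norm_le_norm_smul_rankOne_add (σ : 𝕜) {w : U} {z : V} (F : V →L[𝕜] U)
    (hw : ‖w‖ = 1) (hz : ‖z‖ = 1) : ‖σ‖ - ‖F‖ ≤ ‖σ • rankOne 𝕜 w z + F‖ := by
  simpa [norm_smul, hw, hz] using norm_sub_le_norm_add (σ • rankOne 𝕜 w z) F

/-- The part linear in `F` of the expansion of `rankOne u u ∘L (σ • rankOne w z + F)`, where `u` is
a leading left singular vector of `σ • rankOne w z + F` and `w`, `z` are unit vectors. -/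
noncomputable def reconstructionDeriv (w : U) (z : V) (F : V →L[𝕜] U) : V →L[𝕜] U :=
  (𝕜 ∙ w)ᗮ.starProjection ∘L F ∘L rankOne 𝕜 z z + rankOne 𝕜 w w ∘L F

variable [CompleteSpace U] [CompleteSpace V]

/-- `u` is a leading left singular vector of `A`: a unit eigenvector of `A A†` for the eigenvalue
`‖A‖²`, the largest possible one. -/
structure IsLeadingLeftSingularVector (A : V →L[𝕜] U) (u : U) : Prop where
  norm_eq_one : ‖u‖ = 1
  apply_adjoint_apply : A (adjoint A u) = ((‖A‖ : 𝕜) ^ 2) • u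

theorem adjoint_smul_rankOne_add_apply (σ : 𝕜) (w : U) (z : V) (F : V →L[𝕜] U) (x : U) :
    adjoint (σ • rankOne 𝕜 w z + F) x = (conj σ * inner 𝕜 w x) • z + adjoint F x := by
  rw [map_add, map_smulₛₗ, adjoint_rankOne]
  simp [mul_smul]

variable {A F : V →L[𝕜] U} {σ : 𝕜} {w u : U} {z : V}

theorem rankOne_comp_sub_eq (hA : A = σ • rankOne 𝕜 w z + F) (hw : ‖w‖ = 1) (hu : ‖u‖ = 1) :
    rankOne 𝕜 u u ∘L A - (σ • rankOne 𝕜 w z + reconstructionDeriv w z F) =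
      rankOne 𝕜 ((σ * inner 𝕜 u w) • (𝕜 ∙ w)ᗮ.starProjection u -
          (𝕜 ∙ w)ᗮ.starProjection (F z)) z +
        rankOne 𝕜 ((𝕜 ∙ w)ᗮ.starProjection u) (adjoint F u) +
        inner 𝕜 w u • rankOne 𝕜 w (adjoint F ((𝕜 ∙ w)ᗮ.starProjection u)) -
        ((‖(𝕜 ∙ w)ᗮ.starProjection u‖ : 𝕜) ^ 2) • rankOne 𝕜 w (conj σ • z + adjoint F w) := by
  have hpyth : (‖(𝕜 ∙ w)ᗮ.starProjection u‖ : 𝕜) ^ 2 = 1 - inner 𝕜 w u * inner 𝕜 u w := by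
    have := norm_inner_sq_add_norm_starProjection_orthogonal_singleton_sq 𝕜 hw u
    rw [hu, one_pow] at this
    rw [← inner_conj_symm u w, RCLike.mul_conj, eq_sub_iff_add_eq']
    exact_mod_cast this
  have hu_eq := inner_smul_add_starProjection_orthogonal_singleton 𝕜 hw u
  have hc : conj (inner 𝕜 w u) = inner 𝕜 u w := inner_conj_symm u w
  rw [reconstructionDeriv, rankOne_comp, rankOne_comp, hA, adjoint_smul_rankOne_add_apply,
    comp_rankOne, comp_rankOne, hpyth]
  set c := inner 𝕜 w u
  set c' := inner 𝕜 u w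
  set q := (𝕜 ∙ w)ᗮ.starProjection u
  rw [← hu_eq]
  simp only [map_add, map_smul, _root_.add_apply, _root_.smul_apply,
    ContinuousLinearMap.map_smulₛₗ, map_mul, RingHomCompTriple.comp_apply, RingHom.id_apply, hc,
    smul_add, map_sub, _root_.sub_apply]
  module

namespace IsLeadingLeftSingularVector

theorem norm_adjoint_apply (hu : IsLeadingLeftSingularVector A u) :
    ‖adjoint A u‖ = ‖A‖ := by
  rw [← sq_eq_sq₀ (norm_nonneg _) (norm_nonneg _), apply_norm_sq_eq_inner_adjoint_left,
    adjoint_adjoint, ContinuousLinearMap.comp_apply, hu.apply_adjoint_apply, inner_smul_left,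
    inner_self_eq_norm_sq_to_K, hu.norm_eq_one, ← RCLike.ofReal_pow, RCLike.conj_ofReal]
  simp

theorem sq_norm_smul_starProjection (hu : IsLeadingLeftSingularVector A u)
    (hA : A = σ • rankOne 𝕜 w z + F) :
    ((‖A‖ : 𝕜) ^ 2) • (𝕜 ∙ w)ᗮ.starProjection u = (𝕜 ∙ w)ᗮ.starProjection (F (adjoint A u)) := by
  rw [← map_smul, ← hu.apply_adjoint_apply]
  generalize adjoint A u = v
  simp only [hA, _root_.add_apply, _root_.smul_apply, rankOne_apply, map_add, map_smul,
    starProjection_orthogonalComplement_singleton_eq_zero, smul_zero, zero_add]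

theorem norm_mul_norm_starProjection_le (hu : IsLeadingLeftSingularVector A u)
    (hA : A = σ • rankOne 𝕜 w z + F) : ‖A‖ * ‖(𝕜 ∙ w)ᗮ.starProjection u‖ ≤ ‖F‖ := by
  rcases (norm_nonneg A).eq_or_lt with h0 | hpos
  · simp [← h0]
  refine le_of_mul_le_mul_left ?_ hpos
  calc ‖A‖ * (‖A‖ * ‖(𝕜 ∙ w)ᗮ.starProjection u‖)
      = ‖((‖A‖ : 𝕜) ^ 2) • (𝕜 ∙ w)ᗮ.starProjection u‖ := by
        rw [norm_smul, norm_pow, RCLike.norm_ofReal, abs_norm, sq, mul_assoc]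
    _ = ‖(𝕜 ∙ w)ᗮ.starProjection (F (adjoint A u))‖ := by rw [hu.sq_norm_smul_starProjection hA]
    _ ≤ ‖F (adjoint A u)‖ := norm_starProjection_apply_le _ _
    _ ≤ ‖F‖ * ‖adjoint A u‖ := F.le_opNorm _
    _ = ‖A‖ * ‖F‖ := by rw [hu.norm_adjoint_apply, mul_comm]

theorem abs_norm_mul_inner_sub_norm_le (hu : IsLeadingLeftSingularVector A u)
    (hA : A = σ • rankOne 𝕜 w z + F) (hz : ‖z‖ = 1) :
    |‖σ * inner 𝕜 u w‖ - ‖A‖| ≤ ‖F‖ := by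
  calc |‖σ * inner 𝕜 u w‖ - ‖A‖|
      = |‖(conj σ * inner 𝕜 w u) • z‖ - ‖adjoint A u‖| := by
        rw [norm_smul, hz, mul_one, hu.norm_adjoint_apply, norm_mul, norm_mul, RCLike.norm_conj,
          norm_inner_symm]
    _ ≤ ‖(conj σ * inner 𝕜 w u) • z - adjoint A u‖ := abs_norm_sub_norm_le _ _
    _ = ‖adjoint F u‖ := by
      rw [hA, adjoint_smul_rankOne_add_apply, sub_add_cancel_left, norm_neg]
    _ ≤ ‖F‖ := by
      simpa using (adjoint F).unit_le_opNorm u hu.norm_eq_one.le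

theorem sq_norm_smul_sub_starProjection_apply (hu : IsLeadingLeftSingularVector A u)
    (hA : A = σ • rankOne 𝕜 w z + F) :
    ((‖A‖ : 𝕜) ^ 2) • ((σ * inner 𝕜 u w) • (𝕜 ∙ w)ᗮ.starProjection u -
        (𝕜 ∙ w)ᗮ.starProjection (F z)) =
      ((‖σ * inner 𝕜 u w‖ ^ 2 - ‖A‖ ^ 2 : ℝ) : 𝕜) • (𝕜 ∙ w)ᗮ.starProjection (F z) +
        (σ * inner 𝕜 u w) • (𝕜 ∙ w)ᗮ.starProjection (F (adjoint F u)) := by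
  have hAu : adjoint A u = (conj σ * inner 𝕜 w u) • z + adjoint F u := by
    rw [hA, adjoint_smul_rankOne_add_apply]
  rw [smul_sub, smul_comm, hu.sq_norm_smul_starProjection hA, hAu,
    RCLike.ofReal_sub, RCLike.ofReal_pow, RCLike.ofReal_pow, ← RCLike.mul_conj]
  simp only [map_add, map_smul, map_mul, inner_conj_symm]
  module

theorem norm_mul_norm_sub_starProjection_apply_le (hu : IsLeadingLeftSingularVector A u)
    (hA : A = σ • rankOne 𝕜 w z + F) (hz : ‖z‖ = 1) (hF : ‖F‖ ≤ ‖A‖) :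
    ‖A‖ * ‖(σ * inner 𝕜 u w) • (𝕜 ∙ w)ᗮ.starProjection u -
        (𝕜 ∙ w)ᗮ.starProjection (F z)‖ ≤ 5 * ‖F‖ ^ 2 := by
  rcases (norm_nonneg A).eq_or_lt with h0 | hpos
  · rw [← h0, zero_mul]; positivity
  have hlead := hu.sq_norm_smul_sub_starProjection_apply hA
  obtain ⟨hτ_ge, hτ_le⟩ := abs_le.1 (hu.abs_norm_mul_inner_sub_norm_le hA hz)
  set τ := σ * inner 𝕜 u w
  have hsq : |‖τ‖ ^ 2 - ‖A‖ ^ 2| ≤ 3 * ‖F‖ * ‖A‖ := by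
    rw [abs_le]
    constructor <;> nlinarith [norm_nonneg F, norm_nonneg τ]
  have hp : ‖(𝕜 ∙ w)ᗮ.starProjection (F z)‖ ≤ ‖F‖ :=
    (norm_starProjection_apply_le _ _).trans (F.unit_le_opNorm z hz.le)
  have hg : ‖(𝕜 ∙ w)ᗮ.starProjection (F (adjoint F u))‖ ≤ ‖F‖ * ‖F‖ :=
    (norm_starProjection_apply_le _ _).trans <| F.le_opNorm_of_le <| by
      simpa using (adjoint F).unit_le_opNorm u hu.norm_eq_one.le
  refine le_of_mul_le_mul_left ?_ hpos
  calc ‖A‖ * (‖A‖ * ‖τ • (𝕜 ∙ w)ᗮ.starProjection u - (𝕜 ∙ w)ᗮ.starProjection (F z)‖)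
      = ‖((‖A‖ : 𝕜) ^ 2) • (τ • (𝕜 ∙ w)ᗮ.starProjection u -
          (𝕜 ∙ w)ᗮ.starProjection (F z))‖ := by
        rw [norm_smul, norm_pow, RCLike.norm_ofReal, abs_norm, sq, mul_assoc]
    _ ≤ |‖τ‖ ^ 2 - ‖A‖ ^ 2| * ‖(𝕜 ∙ w)ᗮ.starProjection (F z)‖ +
        ‖τ‖ * ‖(𝕜 ∙ w)ᗮ.starProjection (F (adjoint F u))‖ := by
        rw [hlead]
        refine (norm_add_le _ _).trans_eq ?_
        rw [norm_smul, norm_smul, RCLike.norm_ofReal]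
    _ ≤ 3 * ‖F‖ * ‖A‖ * ‖F‖ + (2 * ‖A‖) * (‖F‖ * ‖F‖) := by
        gcongr
        linarith
    _ = ‖A‖ * (5 * ‖F‖ ^ 2) := by ring

theorem norm_mul_norm_rankOne_comp_sub_le (hu : IsLeadingLeftSingularVector A u)
    (hA : A = σ • rankOne 𝕜 w z + F) (hw : ‖w‖ = 1) (hz : ‖z‖ = 1) (hσ : 2 * ‖F‖ ≤ ‖σ‖) :
    ‖σ‖ * ‖rankOne 𝕜 u u ∘L A - (σ • rankOne 𝕜 w z + reconstructionDeriv w z F)‖ ≤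
      20 * ‖F‖ ^ 2 := by
  have hA_ge : ‖σ‖ / 2 ≤ ‖A‖ := by
    have := norm_sub_norm_le_norm_smul_rankOne_add σ F hw hz
    rw [hA]; linarith
  have hq := hu.norm_mul_norm_starProjection_le hA
  have hr := hu.norm_mul_norm_sub_starProjection_apply_le hA hz (by linarith)
  have hc : ‖inner 𝕜 w u‖ ≤ 1 := by simpa [hw, hu.norm_eq_one] using norm_inner_le_norm (𝕜 := 𝕜) w u
  have hq1 : ‖(𝕜 ∙ w)ᗮ.starProjection u‖ ≤ 1 :=
    (norm_starProjection_apply_le _ _).trans_eq hu.norm_eq_one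
  have hFu : ‖adjoint F u‖ ≤ ‖F‖ := by simpa using (adjoint F).unit_le_opNorm u hu.norm_eq_one.le
  have hFw : ‖adjoint F w‖ ≤ ‖F‖ := by simpa using (adjoint F).unit_le_opNorm w hw.le
  rw [rankOne_comp_sub_eq hA hw hu.norm_eq_one]
  set q := (𝕜 ∙ w)ᗮ.starProjection u
  set r := (σ * inner 𝕜 u w) • q - (𝕜 ∙ w)ᗮ.starProjection (F z)
  have hFq : ‖adjoint F q‖ ≤ ‖F‖ * ‖q‖ := by simpa using (adjoint F).le_opNorm q
  have hσq : ‖σ‖ * ‖q‖ ≤ 2 * ‖F‖ := by nlinarith [norm_nonneg q]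
  have hσr : ‖σ‖ * ‖r‖ ≤ 10 * ‖F‖ ^ 2 := by nlinarith [norm_nonneg r]
  have hσz : ‖conj σ • z + adjoint F w‖ ≤ ‖σ‖ + ‖F‖ :=
    (norm_add_le _ _).trans (by simpa [norm_smul, hz] using hFw)
  calc ‖σ‖ * ‖rankOne 𝕜 r z + rankOne 𝕜 q (adjoint F u) +
          inner 𝕜 w u • rankOne 𝕜 w (adjoint F q) -
          ((‖q‖ : 𝕜) ^ 2) • rankOne 𝕜 w (conj σ • z + adjoint F w)‖
      ≤ ‖σ‖ * (‖r‖ * ‖z‖ + ‖q‖ * ‖adjoint F u‖ + ‖inner 𝕜 w u‖ * (‖w‖ * ‖adjoint F q‖) +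
          ‖q‖ ^ 2 * (‖w‖ * ‖conj σ • z + adjoint F w‖)) := by
        gcongr
        refine (norm_sub_le _ _).trans (add_le_add (norm_add₃_le.trans_eq ?_) (le_of_eq ?_))
        · simp only [norm_smul, norm_rankOne]
        · rw [norm_smul, norm_rankOne, norm_pow, RCLike.norm_ofReal, abs_norm]
    _ ≤ ‖σ‖ * (‖r‖ * 1 + ‖q‖ * ‖F‖ + 1 * (1 * (‖F‖ * ‖q‖)) + ‖q‖ ^ 2 * (1 * (‖σ‖ + ‖F‖))) := by
        rw [hw, hz]
        gcongr
    _ = ‖σ‖ * ‖r‖ + 2 * (‖σ‖ * ‖q‖) * ‖F‖ + (‖σ‖ * ‖q‖) ^ 2 + (‖σ‖ * ‖q‖) * (‖q‖ * ‖F‖) := by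
        ring
    _ ≤ 10 * ‖F‖ ^ 2 + 2 * (2 * ‖F‖) * ‖F‖ + (2 * ‖F‖) ^ 2 + (2 * ‖F‖) * (1 * ‖F‖) := by
        gcongr
    _ = 20 * ‖F‖ ^ 2 := by ring

end IsLeadingLeftSingularVector

end LeadingSingularVector

section TopEigenvalue

variable {𝕜 U V : Type*} [RCLike 𝕜] [NormedAddCommGroup U] [InnerProductSpace 𝕜 U]
  [FiniteDimensional 𝕜 U] [NormedAddCommGroup V] [InnerProductSpace 𝕜 V]

theorem re_inner_apply_self_le_of_hasEigenvalue_le {T : U →ₗ[𝕜] U} (hT : T.IsSymmetric) {μ : ℝ}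
    (hμ : ∀ ν : ℝ, Module.End.HasEigenvalue T (ν : 𝕜) → ν ≤ μ) (x : U) :
    RCLike.re (inner 𝕜 (T x) x) ≤ μ * ‖x‖ ^ 2 := by
  set b := hT.eigenvectorBasis rfl
  have hterm (i) : RCLike.re (inner 𝕜 (T x) (b i) * inner 𝕜 (b i) x) =
      hT.eigenvalues rfl i * ‖inner 𝕜 (b i) x‖ ^ 2 := by
    rw [hT x (b i), hT.apply_eigenvectorBasis rfl i, inner_smul_right, mul_assoc,
      ← inner_conj_symm x, RCLike.conj_mul]
    norm_cast
  calc RCLike.re (inner 𝕜 (T x) x)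
      = ∑ i, hT.eigenvalues rfl i * ‖inner 𝕜 (b i) x‖ ^ 2 := by
        rw [← b.sum_inner_mul_inner, map_sum, Finset.sum_congr rfl fun i _ => hterm i]
    _ ≤ ∑ i, μ * ‖inner 𝕜 (b i) x‖ ^ 2 := by
        gcongr with i
        exact hμ _ (hT.hasEigenvalue_eigenvalues rfl i)
    _ = μ * ‖x‖ ^ 2 := by rw [← Finset.mul_sum, b.sum_sq_norm_inner_right]

theorem isLeadingLeftSingularVector_of_hasEigenvalue_le [CompleteSpace U] [CompleteSpace V]
    {A : V →L[𝕜] U} {u : U} {μ : ℝ} (hu : ‖u‖ = 1) (hAu : A (adjoint A u) = (μ : 𝕜) • u)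
    (hμ : ∀ ν : ℝ, Module.End.HasEigenvalue (A ∘L adjoint A).toLinearMap (ν : 𝕜) → ν ≤ μ) :
    IsLeadingLeftSingularVector A u := by
  have hsq (x : U) : ‖adjoint A x‖ ^ 2 = RCLike.re (inner 𝕜 ((A ∘L adjoint A) x) x) := by
    rw [apply_norm_sq_eq_inner_adjoint_left, adjoint_adjoint]
  have hμ_eq : μ = ‖adjoint A u‖ ^ 2 := by
    rw [hsq, ContinuousLinearMap.comp_apply, hAu, inner_smul_left, inner_self_eq_norm_sq_to_K, hu]
    simp
  have hle : ‖A‖ ≤ ‖adjoint A u‖ := by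
    rw [← LinearIsometryEquiv.norm_map adjoint A]
    refine opNorm_le_bound _ (norm_nonneg _) fun x => ?_
    rw [← sq_le_sq₀ (norm_nonneg _) (by positivity), mul_pow, ← hμ_eq, hsq]
    exact re_inner_apply_self_le_of_hasEigenvalue_le
      (isPositive_self_comp_adjoint A).isSymmetric hμ x
  have hge : ‖adjoint A u‖ ≤ ‖A‖ := by simpa using (adjoint A).unit_le_opNorm u hu.le
  refine ⟨hu, ?_⟩
  rw [hAu, hμ_eq, hle.antisymm hge, RCLike.ofReal_pow]

end TopEigenvalue

section EuclideanMatrix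

variable {𝕜 l m n : Type*} [RCLike 𝕜] [Fintype l] [Fintype m] [Fintype n] [DecidableEq n]

/-- The bounded operator between Euclidean spaces defined by a rectangular matrix (Mathlib's
`Matrix.toEuclideanCLM` is restricted to square matrices). -/
noncomputable def euclideanCLM :
    Matrix m n 𝕜 ≃ₗ[𝕜] EuclideanSpace 𝕜 n →L[𝕜] EuclideanSpace 𝕜 m :=
  toEuclideanLin ≪≫ₗ LinearMap.toContinuousLinearMap

theorem euclideanCLM_apply (A : Matrix m n 𝕜) (x : EuclideanSpace 𝕜 n) :
    euclideanCLM A x = WithLp.toLp 2 (A *ᵥ WithLp.ofLp x) := rfl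

theorem euclideanCLM_one : euclideanCLM (1 : Matrix n n 𝕜) = 1 := by
  ext; simp [euclideanCLM_apply]

theorem euclideanCLM_mul [DecidableEq m] (A : Matrix l m 𝕜) (B : Matrix m n 𝕜) :
    euclideanCLM (A * B) = euclideanCLM A ∘L euclideanCLM B := by
  ext; simp [euclideanCLM_apply]

theorem euclideanCLM_conjTranspose [DecidableEq m] (A : Matrix m n 𝕜) :
    euclideanCLM Aᴴ = adjoint (euclideanCLM A) := by
  simp only [euclideanCLM, LinearEquiv.trans_apply, toEuclideanLin_conjTranspose_eq_adjoint,
    LinearMap.adjoint_toContinuousLinearMap]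

theorem euclideanCLM_vecMulVec (x : EuclideanSpace 𝕜 m) (y : EuclideanSpace 𝕜 n) :
    euclideanCLM (vecMulVec x (star (WithLp.ofLp y))) = rankOne 𝕜 x y := by
  rw [← symm_toEuclideanLin_rankOne, euclideanCLM, LinearEquiv.trans_apply,
    LinearEquiv.apply_symm_apply]
  rfl

theorem norm_apply_le_norm_euclideanCLM (A : Matrix m n 𝕜) (i : m) (k : n) :
    ‖A i k‖ ≤ ‖euclideanCLM A‖ := by
  calc ‖A i k‖ = ‖euclideanCLM A (EuclideanSpace.single k 1) i‖ := by simp [euclideanCLM_apply]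
    _ ≤ ‖euclideanCLM A (EuclideanSpace.single k 1)‖ := PiLp.norm_apply_le _ _
    _ ≤ ‖euclideanCLM A‖ := unit_le_opNorm _ _ (by simp)

theorem norm_euclideanCLM_le_sqrt_sum (A : Matrix m n 𝕜) :
    ‖euclideanCLM A‖ ≤ √(∑ i, ∑ k, ‖A i k‖ ^ 2) := by
  refine opNorm_le_bound _ (Real.sqrt_nonneg _) fun x => ?_
  rw [EuclideanSpace.norm_eq, EuclideanSpace.norm_eq, ← Real.sqrt_mul (by positivity),
    Finset.sum_mul]
  refine Real.sqrt_le_sqrt (Finset.sum_le_sum fun i _ => ?_)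
  calc ‖euclideanCLM A x i‖ ^ 2 ≤ (∑ k, ‖A i k‖ * ‖x k‖) ^ 2 := by
        gcongr
        simp only [← norm_mul]
        exact norm_sum_le Finset.univ fun k => A i k * x k
    _ ≤ (∑ k, ‖A i k‖ ^ 2) * ∑ k, ‖x k‖ ^ 2 := Finset.sum_mul_sq_le_sq_mul_sq _ _ _

theorem norm_euclideanCLM_le_of_norm_apply_le {A : Matrix m n 𝕜} {d : ℝ} (hd : 0 ≤ d)
    (hA : ∀ i k, ‖A i k‖ ≤ d) :
    ‖euclideanCLM A‖ ≤ √(Fintype.card m * Fintype.card n) * d := by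
  refine (norm_euclideanCLM_le_sqrt_sum A).trans ?_
  calc √(∑ i, ∑ k, ‖A i k‖ ^ 2) ≤ √(∑ _i : m, ∑ _k : n, d ^ 2) := by
        gcongr
        exact hA _ _
    _ = √(Fintype.card m * Fintype.card n * d ^ 2) := by simp [mul_assoc]
    _ = √(Fintype.card m * Fintype.card n) * d := by
        rw [Real.sqrt_mul (by positivity), Real.sqrt_sq hd]

end EuclideanMatrix

section RankOneSignal

variable {L K : ℕ}

theorem norm_toLp_sq_eq_normSq {M : ℕ} (x : Fin M → ℝ) :
    ‖WithLp.toLp 2 x‖ ^ 2 = normSq x := by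
  simp [EuclideanSpace.norm_sq_eq, normSq]

theorem IsTopEigenvector.isLeadingLeftSingularVector {A : Matrix (Fin L) (Fin K) ℝ}
    {u : Fin L → ℝ} (hu : IsTopEigenvector (A * Aᵀ) u) :
    IsLeadingLeftSingularVector (euclideanCLM A) (WithLp.toLp 2 u) := by
  obtain ⟨hu_norm, μ, hμ, hμ_max⟩ := hu
  have hcomp : euclideanCLM A ∘L adjoint (euclideanCLM A) = euclideanCLM (A * Aᵀ) := by
    rw [euclideanCLM_mul, ← euclideanCLM_conjTranspose, conjTranspose_eq_transpose_of_trivial]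
  have hu_one : ‖WithLp.toLp 2 u‖ = 1 := by
    rw [← sq_eq_sq₀ (norm_nonneg _) zero_le_one, norm_toLp_sq_eq_normSq, hu_norm, one_pow]
  refine isLeadingLeftSingularVector_of_hasEigenvalue_le (μ := μ) hu_one ?_ fun ν hν => ?_
  · rw [← ContinuousLinearMap.comp_apply, hcomp, euclideanCLM_apply, hμ]
    rfl
  · obtain ⟨v, hv⟩ := hν.exists_hasEigenvector
    rw [hcomp] at hv
    refine hμ_max ν v.ofLp (fun h0 => hv.2 (WithLp.ofLp_injective 2 h0)) ?_
    exact congrArg WithLp.ofLp hv.apply_eq_smul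

/-- The matrix `P₀ E Hᵀ S₀ H + P₀⊥ E` for the signal matrix `H = x yᵀ`: the first-order term, in
the noise matrix `E`, of the rank-one reconstruction of `H` from `H + E`. -/
noncomputable def firstOrderMatrix (x : Fin L → ℝ) (y : Fin K → ℝ)
    (E : Matrix (Fin L) (Fin K) ℝ) : Matrix (Fin L) (Fin K) ℝ :=
  (1 - (normSq x)⁻¹ • vecMulVec x x) * E * (vecMulVec x y)ᵀ *
      ((normSq x ^ 2 * normSq y)⁻¹ • vecMulVec x x) * vecMulVec x y +
    ((normSq x)⁻¹ • vecMulVec x x) * E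

theorem firstOrderMatrix_smul (x : Fin L → ℝ) (y : Fin K → ℝ) (c : ℝ)
    (E : Matrix (Fin L) (Fin K) ℝ) :
    firstOrderMatrix x y (c • E) = c • firstOrderMatrix x y E := by
  simp only [firstOrderMatrix, Matrix.mul_smul _ c E, Matrix.smul_mul c, smul_add]

theorem euclideanCLM_vecMulVec_real (x : Fin L → ℝ) (y : Fin K → ℝ) :
    euclideanCLM (vecMulVec x y) = rankOne ℝ (WithLp.toLp 2 x) (WithLp.toLp 2 y) := by
  rw [← euclideanCLM_vecMulVec, star_trivial]

theorem rankOne_normalize_normalize {U V : Type*} [NormedAddCommGroup U] [InnerProductSpace ℝ U]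
    [NormedAddCommGroup V] [InnerProductSpace ℝ V] (x : U) (y : V) :
    rankOne ℝ (NormedSpace.normalize x) (NormedSpace.normalize y) =
      (‖x‖ * ‖y‖)⁻¹ • rankOne ℝ x y := by
  ext v
  simp only [NormedSpace.normalize, rankOne_apply, _root_.smul_apply, inner_smul_left,
    RCLike.conj_to_real, smul_smul]
  congr 1
  ring

theorem euclideanCLM_inv_normSq_smul_vecMulVec (x : Fin L → ℝ) :
    euclideanCLM ((normSq x)⁻¹ • vecMulVec x x) =
      rankOne ℝ (NormedSpace.normalize (WithLp.toLp 2 x))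
        (NormedSpace.normalize (WithLp.toLp 2 x)) := by
  rw [rankOne_normalize_normalize, ← sq, norm_toLp_sq_eq_normSq, map_smul,
    euclideanCLM_vecMulVec_real]

theorem transpose_mul_vecMulVec_mul_self (x : Fin L → ℝ) (y : Fin K → ℝ) :
    (vecMulVec x y)ᵀ * vecMulVec x x * vecMulVec x y = normSq x ^ 2 • vecMulVec y y := by
  have hx : x ⬝ᵥ x = normSq x := by simp [dotProduct, normSq, sq]
  simp only [transpose_vecMulVec, vecMulVec_mul_vecMulVec, hx, vecMulVec_smul, Matrix.smul_mul,
    smul_smul, sq]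

theorem euclideanCLM_firstOrderMatrix {x : Fin L → ℝ} (hx : x ≠ 0) (y : Fin K → ℝ)
    (E : Matrix (Fin L) (Fin K) ℝ) :
    euclideanCLM (firstOrderMatrix x y E) =
      reconstructionDeriv (NormedSpace.normalize (WithLp.toLp 2 x))
        (NormedSpace.normalize (WithLp.toLp 2 y)) (euclideanCLM E) := by
  have hx0 : WithLp.toLp 2 x ≠ 0 := by simpa using hx
  have hx2 : normSq x ≠ 0 := by
    rw [← norm_toLp_sq_eq_normSq]
    positivity
  have hright : (vecMulVec x y)ᵀ * ((normSq x ^ 2 * normSq y)⁻¹ • vecMulVec x x) * vecMulVec x y =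
      (normSq y)⁻¹ • vecMulVec y y := by
    rw [Matrix.mul_smul, Matrix.smul_mul, transpose_mul_vecMulVec_mul_self, smul_smul]
    congr 1
    field_simp
  have hproj : (ℝ ∙ NormedSpace.normalize (WithLp.toLp 2 x))ᗮ.starProjection =
      1 - rankOne ℝ (NormedSpace.normalize (WithLp.toLp 2 x))
        (NormedSpace.normalize (WithLp.toLp 2 x)) := by
    ext1 v
    rw [starProjection_orthogonal_val,
      starProjection_unit_singleton ℝ (NormedSpace.norm_normalize_eq_one_iff.2 hx0)]
    rfl
  rw [firstOrderMatrix, Matrix.mul_assoc _ _ᵀ, Matrix.mul_assoc _ (_ᵀ * _), hright, map_add,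
    euclideanCLM_mul, euclideanCLM_mul, euclideanCLM_mul, map_sub, euclideanCLM_one,
    euclideanCLM_inv_normSq_smul_vecMulVec, euclideanCLM_inv_normSq_smul_vecMulVec,
    reconstructionDeriv, hproj, ContinuousLinearMap.comp_assoc]

theorem abs_reconstruction_sub_apply_le {x : Fin L → ℝ} (hx : x ≠ 0) {y : Fin K → ℝ} (hy : y ≠ 0)
    {E : Matrix (Fin L) (Fin K) ℝ}
    (hE : 2 * ‖euclideanCLM E‖ ≤ ‖WithLp.toLp 2 x‖ * ‖WithLp.toLp 2 y‖) {u : Fin L → ℝ}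
    (hu : IsTopEigenvector ((vecMulVec x y + E) * (vecMulVec x y + E)ᵀ) u) (i : Fin L)
    (k : Fin K) :
    ‖WithLp.toLp 2 x‖ * ‖WithLp.toLp 2 y‖ * |(vecMulVec u u * (vecMulVec x y + E) -
        (vecMulVec x y + firstOrderMatrix x y E)) i k| ≤ 20 * ‖euclideanCLM E‖ ^ 2 := by
  set σ := ‖WithLp.toLp 2 x‖ * ‖WithLp.toLp 2 y‖
  set w := NormedSpace.normalize (WithLp.toLp 2 x)
  set z := NormedSpace.normalize (WithLp.toLp 2 y)
  have hx0 : WithLp.toLp 2 x ≠ 0 := by simpa using hx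
  have hy0 : WithLp.toLp 2 y ≠ 0 := by simpa using hy
  have hσ : ‖σ‖ = σ := Real.norm_of_nonneg (by positivity)
  have hH : euclideanCLM (vecMulVec x y) = σ • rankOne ℝ w z := by
    rw [rankOne_normalize_normalize, smul_inv_smul₀ (by positivity), euclideanCLM_vecMulVec_real]
  have hmain := hu.isLeadingLeftSingularVector.norm_mul_norm_rankOne_comp_sub_le (w := w) (z := z)
    (by rw [map_add, hH]) (NormedSpace.norm_normalize_eq_one_iff.2 hx0)
    (NormedSpace.norm_normalize_eq_one_iff.2 hy0) (hE.trans_eq hσ.symm)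
  rw [hσ, ← hH, ← euclideanCLM_firstOrderMatrix hx, ← euclideanCLM_vecMulVec_real,
    ← euclideanCLM_mul, ← map_add, ← map_sub] at hmain
  refine le_trans ?_ hmain
  gcongr
  exact norm_apply_le_norm_euclideanCLM (𝕜 := ℝ) _ i k

end RankOneSignal

section Hankelization

variable {L K : ℕ}

theorem hankelize_add (Y Z : Matrix (Fin L) (Fin K) ℝ) (j : ℕ) :
    hankelize (Y + Z) j = hankelize Y j + hankelize Z j := by
  simp only [hankelize, ← add_div, ← Finset.sum_add_distrib, Matrix.add_apply, ite_add_ite,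
    add_zero]

theorem hankelize_smul (c : ℝ) (Y : Matrix (Fin L) (Fin K) ℝ) (j : ℕ) :
    hankelize (c • Y) j = c * hankelize Y j := by
  simp only [hankelize, ← mul_div_assoc, Finset.mul_sum, mul_ite, mul_zero, Matrix.smul_apply,
    smul_eq_mul]

theorem hankelize_sub (Y Z : Matrix (Fin L) (Fin K) ℝ) (j : ℕ) :
    hankelize (Y - Z) j = hankelize Y j - hankelize Z j := by
  rw [eq_sub_iff_add_eq, ← hankelize_add, sub_add_cancel]

theorem abs_hankelize_le {Y : Matrix (Fin L) (Fin K) ℝ} {b : ℝ} (hb : 0 ≤ b)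
    (hY : ∀ i k, |Y i k| ≤ b) (j : ℕ) : |hankelize Y j| ≤ b := by
  have hcount : (0 : ℝ) ≤ ∑ i : Fin L, ∑ k : Fin K, if (i : ℕ) + k = j then (1 : ℝ) else 0 := by
    positivity
  rw [hankelize, abs_div, abs_of_nonneg hcount]
  refine div_le_of_le_mul₀ hcount hb ?_
  simp only [Finset.mul_sum]
  refine (Finset.abs_sum_le_sum_abs _ _).trans (Finset.sum_le_sum fun i _ => ?_)
  refine (Finset.abs_sum_le_sum_abs _ _).trans (Finset.sum_le_sum fun k _ => ?_)
  split_ifs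
  · simpa using hY i k
  · simp

theorem sum_antidiagonal_indicator_pos {j : ℕ} (hL : 0 < L) (hK : 0 < K) (hj : j + 1 < L + K) :
    (0 : ℝ) < ∑ i : Fin L, ∑ k : Fin K, if (i : ℕ) + k = j then (1 : ℝ) else 0 := by
  let i₀ : Fin L := ⟨min j (L - 1), by omega⟩
  let k₀ : Fin K := ⟨j - min j (L - 1), by omega⟩
  have hmem : (i₀ : ℕ) + k₀ = j := by simp only [i₀, k₀]; omega
  refine Finset.sum_pos' (fun i _ => by positivity) ⟨i₀, Finset.mem_univ _, ?_⟩
  refine Finset.sum_pos' (fun k _ => by positivity) ⟨k₀, Finset.mem_univ _, ?_⟩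
  rw [if_pos hmem]
  exact one_pos

theorem hankelize_hankelOf (x : ℕ → ℝ) {j : ℕ} (hL : 0 < L) (hK : 0 < K) (hj : j + 1 < L + K) :
    hankelize (hankelOf x L K) j = x j := by
  rw [hankelize, div_eq_iff (sum_antidiagonal_indicator_pos hL hK hj).ne']
  simp only [Finset.mul_sum]
  refine Finset.sum_congr rfl fun i _ => Finset.sum_congr rfl fun k _ => ?_
  split_ifs with h
  · simp [hankelOf, h]
  · simp

end Hankelization

section ExponentialSignal

theorem hankelOf_expSignal (a : ℝ) (L K : ℕ) :
    hankelOf (expSignal a) L K = vecMulVec (Wvec a L) (Wvec a K) := by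
  ext i k
  exact pow_add a i k

theorem pow_pred_le_norm_Wvec (a : ℝ) {M : ℕ} (hM : 0 < M) :
    a ^ (M - 1) ≤ ‖WithLp.toLp 2 (Wvec a M)‖ :=
  (le_abs_self _).trans
    (PiLp.norm_apply_le (WithLp.toLp 2 (Wvec a M)) ⟨M - 1, Nat.sub_one_lt_of_lt hM⟩)

theorem pow_pred_le_norm_Wvec_mul_norm_Wvec {a : ℝ} (ha : 0 ≤ a) {L K N : ℕ} (hL : 0 < L)
    (hK : 0 < K) (hLK : L + K = N + 1) :
    a ^ (N - 1) ≤ ‖WithLp.toLp 2 (Wvec a L)‖ * ‖WithLp.toLp 2 (Wvec a K)‖ := by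
  rw [show N - 1 = L - 1 + (K - 1) by omega, pow_add]
  gcongr <;> apply pow_pred_le_norm_Wvec <;> assumption

theorem Wvec_ne_zero (a : ℝ) {M : ℕ} (hM : 0 < M) : Wvec a M ≠ 0 := fun h => by
  simpa [Wvec] using congrFun h ⟨0, hM⟩

theorem norm_euclideanCLM_le_mul {L K N : ℕ} (hL : L ≤ N) (hK : K ≤ N) {B : ℝ} (hB : 0 ≤ B)
    {E : Matrix (Fin L) (Fin K) ℝ} (hE : ∀ i k, |E i k| ≤ B) : ‖euclideanCLM E‖ ≤ N * B := by
  refine (norm_euclideanCLM_le_of_norm_apply_le hB hE).trans ?_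
  rw [Fintype.card_fin, Fintype.card_fin]
  gcongr
  refine Real.sqrt_le_iff.2 ⟨by positivity, ?_⟩
  rw [sq]
  gcongr

theorem abs_hankelize_reconstruction_sub_le {a : ℝ} (ha : 0 < a) {L K N : ℕ} (hL : 0 < L)
    (hK : 0 < K) (hLK : L + K = N + 1) {B : ℝ} (hN : 2 * (N * B) ≤ a ^ (N - 1))
    {E : Matrix (Fin L) (Fin K) ℝ} (hE : ∀ i k, |E i k| ≤ B) {u : Fin L → ℝ}
    (hu : IsTopEigenvector
      ((hankelOf (expSignal a) L K + E) * (hankelOf (expSignal a) L K + E)ᵀ) u)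
    {j : ℕ} (hj : j < N) :
    |hankelize (vecMulVec u u * (hankelOf (expSignal a) L K + E)) j - a ^ j -
        hankelize (firstOrderMatrix (Wvec a L) (Wvec a K) E) j| ≤
      20 * (N * B) ^ 2 / a ^ (N - 1) := by
  have hB : 0 ≤ B := (abs_nonneg _).trans (hE ⟨0, hL⟩ ⟨0, hK⟩)
  have hσ := pow_pred_le_norm_Wvec_mul_norm_Wvec ha.le hL hK hLK
  have hEnorm : ‖euclideanCLM E‖ ≤ N * B :=
    norm_euclideanCLM_le_mul (by omega) (by omega) hB hE
  have hsignal : hankelize (hankelOf (expSignal a) L K) j = a ^ j :=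
    hankelize_hankelOf _ hL hK (by omega)
  rw [← hsignal, sub_sub, ← hankelize_add, ← hankelize_sub]
  refine abs_hankelize_le (by positivity) (fun i k => ?_) j
  rw [hankelOf_expSignal] at hu ⊢
  have hentry := abs_reconstruction_sub_apply_le (Wvec_ne_zero a hL) (Wvec_ne_zero a hK)
    (by linarith) hu i k
  rw [le_div_iff₀' (by positivity)]
  exact (mul_le_mul_of_nonneg_right hσ (abs_nonneg _)).trans (hentry.trans (by gcongr))

theorem eventually_two_mul_natCast_mul_le_pow_pred {a : ℝ} (ha : 1 < a) (B : ℝ) :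
    ∀ᶠ N : ℕ in atTop, 2 * (N * B) ≤ a ^ (N - 1) := by
  have ha0 : 0 < a := one_pos.trans ha
  have hlim : Tendsto (fun N : ℕ => 2 * B * a * ((N : ℝ) ^ 1 / a ^ N)) atTop (nhds 0) := by
    simpa using (tendsto_pow_const_div_const_pow_of_one_lt 1 ha).const_mul (2 * B * a)
  filter_upwards [hlim.eventually_le_const one_pos, eventually_ge_atTop 1] with N hN hN1
  rw [← mul_div_assoc, div_le_one (by positivity), ← Nat.sub_add_cancel hN1, pow_succ] at hN
  refine le_of_mul_le_mul_right (le_trans (le_of_eq ?_) hN) ha0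
  rw [Nat.sub_add_cancel hN1]
  ring

end ExponentialSignal

theorem stmt_1_general {a : ℝ} (ha : 1 < a) (B : ℝ) :
    ∃ C > (0 : ℝ), ∃ N₀ : ℕ, ∀ N, N₀ ≤ N → ∀ L K : ℕ, 0 < L → 0 < K → L + K = N + 1 →
      ∀ E : Matrix (Fin L) (Fin K) ℝ, (∀ i k, |E i k| ≤ B) →
        ∀ u : Fin L → ℝ, IsTopEigenvector
          ((hankelOf (expSignal a) L K + E) * (hankelOf (expSignal a) L K + E)ᵀ) u →
          ∀ j, j < N →
            |hankelize (vecMulVec u u * (hankelOf (expSignal a) L K + E)) j - a ^ j -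
                hankelize (firstOrderMatrix (Wvec a L) (Wvec a K) E) j| ≤
              C * (N : ℝ) ^ 2 * a ^ (-(N : ℝ)) := by
  have ha0 : 0 < a := one_pos.trans ha
  obtain ⟨N₀, hN₀⟩ := eventually_atTop.1 (eventually_two_mul_natCast_mul_le_pow_pred ha B)
  refine ⟨20 * B ^ 2 * a + 1, by positivity, N₀, fun N hN L K hL hK hLK E hE u hu j hj => ?_⟩
  calc _ ≤ 20 * (N * B) ^ 2 / a ^ (N - 1) :=
        abs_hankelize_reconstruction_sub_le ha0 hL hK hLK (hN₀ N hN) hE hu hj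
    _ = 20 * B ^ 2 * a * (N : ℝ) ^ 2 * a ^ (-(N : ℝ)) := by
        rw [Real.rpow_neg ha0.le, Real.rpow_natCast, ← pow_sub_one_mul (by omega : N ≠ 0)]
        field_simp
    _ ≤ (20 * B ^ 2 * a + 1) * (N : ℝ) ^ 2 * a ^ (-(N : ℝ)) := by
        gcongr
        exact le_add_of_nonneg_right zero_le_one

theorem mul_rho_eq_hankelize (a ξ φ δ : ℝ) (L K j : ℕ) :
    δ * rho a ξ φ L K j = hankelize (firstOrderMatrix (Wvec a L) (Wvec a K)
      (δ • hankelOf (cosNoise ξ φ) L K)) j := by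
  rw [firstOrderMatrix_smul, hankelize_smul, firstOrderMatrix, hankelize_add, rho,
    hankelOf_expSignal]

theorem abs_smul_hankelOf_cosNoise_le (ξ φ δ : ℝ) {L K : ℕ} (i : Fin L) (k : Fin K) :
    |(δ • hankelOf (cosNoise ξ φ) L K) i k| ≤ |δ| :=
  (abs_mul _ _).trans_le (mul_le_of_le_one_right (abs_nonneg δ) (Real.abs_cos_le_one _))

/-- `r_j(N) = δ·ρ_j(N) + O(N² a^{-N})` uniformly in `0 ≤ j < N`. -/
theorem stmt_1 (a ξ φ α : ℝ) (ha : 1 < a) (hξ : ξ ∈ Set.Ioo 0 Real.pi)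
    (hφ : φ ∈ Set.Ico 0 (2 * Real.pi)) (hα : α ∈ Set.Ioo (0 : ℝ) 1)
    (L K : ℕ → ℕ)
    (hLK : ∀ N, 3 ≤ N → 1 < L N ∧ L N ≤ K N ∧ L N + K N = N + 1)
    (hlim : Tendsto (fun N : ℕ => (L N : ℝ) / (N : ℝ)) atTop (nhds α))
    (δ : ℝ) :
    ∃ C > (0 : ℝ), ∃ N₀ : ℕ, ∀ N, N₀ ≤ N →
      ∀ u : Fin (L N) → ℝ, IsTopEigenvector (HdeltaSq a ξ φ δ (L N) (K N)) u →
        ∀ j, j < N →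
          |recErr a ξ φ δ (L N) (K N) u j - δ * rho a ξ φ (L N) (K N) j| ≤
            C * (N : ℝ) ^ 2 * a ^ (-(N : ℝ)) := by
  obtain ⟨C, hC, N₁, hbound⟩ := stmt_1_general ha |δ|
  refine ⟨C, hC, max 3 N₁, fun N hN u hu j hj => ?_⟩
  obtain ⟨hL, hLleK, hsum⟩ := hLK N (le_of_max_le_left hN)
  rw [mul_rho_eq_hankelize]
  exact hbound N (le_of_max_le_right hN) _ _ (by omega) (by omega) hsum _
    (abs_smul_hankelOf_cosNoise_le ξ φ δ) u hu j hj
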